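/- There exists a constant γ > 0 such that for every n ≥ 1, every word w of length n over A whose fundamental interval Δ(w) is full, and every Borel set E ⊆ Δ(w), one has μ(Tⁿ(E))·μ(Δ(w)) ≤ γ·μ(E), where Tⁿ(E) denotes the image of E under the n-th iterate of T. (This is Rohlin's criterion, from which the paper deduces that T is exact.) -/

import Mathlib

open MeasureTheory Set

/-- The greedy β-transformation with deleted digit set `{0, a₁, a₂}`:
`T x = βx` on `Δ(0) = [0, a₁/β)`, `T x = βx − a₁` on `Δ(a₁) = [a₁/β, a₂/β)`,
and `T x = βx − a₂` on `Δ(a₂) = [a₂/β, a₁)`. -/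
noncomputable def greedyT (β a₁ a₂ : ℝ) (x : ℝ) : ℝ :=
  if x < a₁ / β then β * x
  else if x < a₂ / β then β * x - a₁
  else β * x - a₂

/-- The interval `Δ(b)` associated to a digit `b ∈ {0, a₁, a₂}`. -/
noncomputable def digitInt (β a₁ a₂ : ℝ) (b : ℝ) : Set ℝ :=
  if b = 0 then Set.Ico 0 (a₁ / β)
  else if b = a₁ then Set.Ico (a₁ / β) (a₂ / β)
  else Set.Ico (a₂ / β) a₁

/-- The fundamental interval `Δ(w) = ⋂_{k < n} T⁻ᵏ Δ(b_k)` of a word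
`w = (b₀, …, b_{n−1})`. -/
noncomputable def cyl (β a₁ a₂ : ℝ) (w : List ℝ) : Set ℝ :=
  ⋂ k ∈ Finset.range w.length,
    (greedyT β a₁ a₂)^[k] ⁻¹' digitInt β a₁ a₂ (w.getD k 0)

/-- `w` is a word over the alphabet `A = {0, a₁, a₂}`. -/
def isWord (a₁ a₂ : ℝ) (w : List ℝ) : Prop := ∀ b ∈ w, b = 0 ∨ b = a₁ ∨ b = a₂

/-- The fundamental interval `Δ(w)` is full: `λ(Δ(w)) = a₁/β^|w|`. -/
def isFull (β a₁ a₂ : ℝ) (w : List ℝ) : Prop :=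
  volume (cyl β a₁ a₂ w) = ENNReal.ofReal (a₁ / β ^ w.length)

/-- Condition (6): `a₁ · max (β−1) 1 < a₂ < a₁ · min 2 β`. -/
def condition6 (β a₁ a₂ : ℝ) : Prop :=
  a₁ * max (β - 1) 1 < a₂ ∧ a₂ < a₁ * min 2 β

/-- `w ∈ Bₙ`: `w` is a word of length `n` over `A` with `λ(Δ(w)) > 0`, `Δ(w)`
non-full, and `Δ(w′)` non-full for every nonempty proper prefix `w′` of `w`. -/
def memB (β a₁ a₂ : ℝ) (n : ℕ) (w : List ℝ) : Prop :=
  w.length = n ∧ isWord a₁ a₂ w ∧ 0 < volume (cyl β a₁ a₂ w) ∧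
    ¬ isFull β a₁ a₂ w ∧
    ∀ w' : List ℝ, w' ≠ [] → w' <+: w → w' ≠ w → ¬ isFull β a₁ a₂ w'

/-- `κ(n)`: the number of elements of `Bₙ`. -/
noncomputable def kappa (β a₁ a₂ : ℝ) (n : ℕ) : ℕ :=
  {w : List ℝ | memB β a₁ a₂ n w}.ncard

/-- The density `φ = 1 + Σ_{n≥1} Σ_{w ∈ Bₙ} β^(−n)·1_{TⁿΔ(w)}`. -/
noncomputable def phi (β a₁ a₂ : ℝ) (x : ℝ) : ℝ :=
  1 + ∑' n : ℕ, ∑' w : {w : List ℝ // memB β a₁ a₂ (n + 1) w},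
    Set.indicator ((greedyT β a₁ a₂)^[n + 1] '' cyl β a₁ a₂ w.1)
      (fun _ => (β ^ (n + 1))⁻¹) x

/-- The measure `μ` on `[0, a₁)` with density `φ` with respect to Lebesgue
measure: `μ(E) = ∫_E φ dλ` for Borel `E ⊆ [0, a₁)`. -/
noncomputable def muMeas (β a₁ a₂ : ℝ) : Measure ℝ :=
  (volume.restrict (Set.Ico 0 a₁)).withDensity
    fun x => ENNReal.ofReal (phi β a₁ a₂ x)


/-- right endpoint of the digit interval -/
noncomputable def qEnd (β a₁ a₂ b : ℝ) : ℝ :=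
  if b = 0 then a₁ / β else if b = a₁ then a₂ / β else a₁

/-- one step of the image-length recursion -/
noncomputable def tauStep (β a₁ a₂ t b : ℝ) : ℝ := max 0 (β * min t (qEnd β a₁ a₂ b) - b)

/-- length of the image of the fundamental interval -/
noncomputable def tau (β a₁ a₂ : ℝ) (w : List ℝ) : ℝ := w.foldl (tauStep β a₁ a₂) a₁

theorem tau_append (β a₁ a₂ : ℝ) (w : List ℝ) (b : ℝ) :
    tau β a₁ a₂ (w ++ [b]) = tauStep β a₁ a₂ (tau β a₁ a₂ w) b := by
  simp [tau]

theorem digitInt_eq {β a₁ a₂ : ℝ} (ha₁ : 0 < a₁) (h12 : a₁ < a₂) {b : ℝ}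
    (hb : b = 0 ∨ b = a₁ ∨ b = a₂) :
    digitInt β a₁ a₂ b = Ico (b / β) (qEnd β a₁ a₂ b) := by
  have h1 : a₁ ≠ 0 := ha₁.ne'
  have h2 : a₂ ≠ 0 := (ha₁.trans h12).ne'
  have h3 : a₂ ≠ a₁ := h12.ne'
  rcases hb with rfl | rfl | rfl <;> simp [digitInt, qEnd, *]

theorem greedyT_digit {β a₁ a₂ : ℝ} (hβ : 0 < β) (ha₁ : 0 < a₁) (h12 : a₁ < a₂) {b : ℝ}
    (hb : b = 0 ∨ b = a₁ ∨ b = a₂) {y : ℝ} (hy : y ∈ Ico (b / β) (qEnd β a₁ a₂ b)) :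
    greedyT β a₁ a₂ y = β * y - b := by
  have h1 : a₁ ≠ 0 := ha₁.ne'
  have h2 : a₂ ≠ 0 := (ha₁.trans h12).ne'
  have h3 : a₂ ≠ a₁ := h12.ne'
  have h4 : a₁ / β < a₂ / β := by gcongr
  rcases hb with rfl | rfl | rfl <;> simp [qEnd, *] at hy <;> unfold greedyT
  · simp [hy.2]
  · rw [if_neg (by linarith), if_pos hy.2]
  · rw [if_neg (by linarith), if_neg (by linarith)]

theorem tauStep_le {β a₁ a₂ : ℝ} (hβ : 0 < β) (ha₁ : 0 < a₁) (h12 : a₁ < a₂)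
    (hc : condition6 β a₁ a₂) {b : ℝ} (hb : b = 0 ∨ b = a₁ ∨ b = a₂) (t : ℝ) :
    tauStep β a₁ a₂ t b ≤ a₁ := by
  have h1 : a₁ ≠ 0 := ha₁.ne'
  have h2 : a₂ ≠ 0 := (ha₁.trans h12).ne'
  have h3 : a₂ ≠ a₁ := h12.ne'
  obtain ⟨c1, c2⟩ := hc
  have d1 : a₁ * (β - 1) < a₂ := lt_of_le_of_lt (by gcongr; exact le_max_left _ _) c1
  have d2 : a₂ < a₁ * 2 := lt_of_lt_of_le c2 (by gcongr; exact min_le_left _ _)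
  have key : β * min t (qEnd β a₁ a₂ b) ≤ β * qEnd β a₁ a₂ b := by
    gcongr; exact min_le_right _ _
  have e1 : β * (a₁ / β) = a₁ := by field_simp
  have e2 : β * (a₂ / β) = a₂ := by field_simp
  apply max_le ha₁.le
  rcases hb with rfl | rfl | rfl <;> simp only [qEnd, h1, h2, h3, if_true, if_false] at key ⊢ <;> linarith

theorem tauStep_nonneg (β a₁ a₂ t b : ℝ) : 0 ≤ tauStep β a₁ a₂ t b := le_max_left _ _

theorem cyl_append (β a₁ a₂ : ℝ) (w : List ℝ) (b : ℝ) :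
    cyl β a₁ a₂ (w ++ [b]) =
      cyl β a₁ a₂ w ∩ (greedyT β a₁ a₂)^[w.length] ⁻¹' digitInt β a₁ a₂ b := by
  ext x
  simp only [cyl, mem_iInter, mem_inter_iff, Finset.mem_range, List.length_append,
    List.length_singleton, mem_preimage]
  constructor
  · intro h
    refine ⟨fun k hk => ?_, ?_⟩
    · have := h k (by omega)
      rwa [List.getD_append _ _ _ _ hk] at this
    · have := h w.length (by omega)
      rwa [List.getD_append_right _ _ _ _ le_rfl, Nat.sub_self, List.getD_cons_zero] at this
  · rintro ⟨h1, h2⟩ k hk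
    rcases Nat.lt_or_ge k w.length with h | h
    · rw [List.getD_append _ _ _ _ h]; exact h1 k h
    · have : k = w.length := by omega
      subst this
      rwa [List.getD_append_right _ _ _ _ le_rfl, Nat.sub_self, List.getD_cons_zero]

theorem tau_mem {β a₁ a₂ : ℝ} (hβ : 0 < β) (ha₁ : 0 < a₁) (h12 : a₁ < a₂)
    (hc : condition6 β a₁ a₂) (w : List ℝ) (hw : isWord a₁ a₂ w) :
    0 ≤ tau β a₁ a₂ w ∧ tau β a₁ a₂ w ≤ a₁ := by
  rcases List.eq_nil_or_concat w with rfl | ⟨v, b, rfl⟩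
  · simp [tau, ha₁.le]
  · rw [List.concat_eq_append] at *
    rw [tau_append]
    exact ⟨tauStep_nonneg _ _ _ _ _, tauStep_le hβ ha₁ h12 hc (hw b (by simp)) _⟩

theorem cyl_struct {β a₁ a₂ : ℝ} (hβ : 1 < β) (ha₁ : 0 < a₁) (h12 : a₁ < a₂)
    (w : List ℝ) (hw : isWord a₁ a₂ w) :
    ∃ c : ℝ, Ico 0 a₁ ∩ cyl β a₁ a₂ w = Ico c (c + tau β a₁ a₂ w / β ^ w.length) ∧
      ∀ x ∈ Ico 0 a₁ ∩ cyl β a₁ a₂ w,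
        (greedyT β a₁ a₂)^[w.length] x = β ^ w.length * (x - c) := by
  have hβ0 : 0 < β := by linarith
  induction w using List.reverseRecOn with
  | nil => exact ⟨0, by simp [cyl, tau], by simp⟩
  | append_singleton w b ih =>
    obtain ⟨c, h1, h2⟩ := ih (fun b hb => hw b (by simp [hb]))
    have hb := hw b (by simp)
    have hP : 0 < β ^ w.length := by positivity
    have hmem : ∀ x, x ∈ Ico 0 a₁ ∩ cyl β a₁ a₂ (w ++ [b]) ↔
        x ∈ Ico 0 a₁ ∩ cyl β a₁ a₂ w ∧ β ^ w.length * (x - c) ∈ Ico (b / β) (qEnd β a₁ a₂ b) := by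
      intro x
      rw [cyl_append, ← inter_assoc, mem_inter_iff]
      refine and_congr_right fun hx => ?_
      rw [mem_preimage, h2 x hx, digitInt_eq ha₁ h12 hb]
    refine ⟨c + b / β / β ^ w.length, ?_, ?_⟩
    · ext x
      rw [hmem, h1, tau_append, tauStep, List.length_append, List.length_singleton]
      set t := tau β a₁ a₂ w
      set q := qEnd β a₁ a₂ b
      set P := β ^ w.length with hPdef
      rw [pow_succ, ← hPdef]
      have hb0 : 0 ≤ b / β := by
        rcases hb with rfl | rfl | rfl
        · simp
        · positivity
        · have := ha₁.trans h12; positivity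
      obtain ⟨y, rfl⟩ : ∃ y, x = c + y / P := ⟨P * (x - c), by field_simp; ring⟩
      have e1 : P * (c + y / P - c) = y := by field_simp; ring
      rw [e1]
      simp only [mem_Ico]
      have e2 : max 0 (β * min t q - b) / (P * β) = (max 0 (β * min t q - b) / β) / P := by
        field_simp
      have e3 : ∀ z, c + b / β / P + z / P = c + (b / β + z) / P := by intro z; ring
      have e4 : ∀ z z', c + z / P < c + z' / P ↔ z < z' := by
        intro z z'; rw [add_lt_add_iff_left, div_lt_div_iff_of_pos_right hP]
      have e5 : ∀ z z', c + z / P ≤ c + z' / P ↔ z ≤ z' := by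
        intro z z'; rw [add_le_add_iff_left, div_le_div_iff_of_pos_right hP]
      have e6 : c ≤ c + y / P ↔ 0 ≤ y := by simpa using e5 0 y
      rw [e2, e3, e4, e4, e5, e6]
      have e7 : b / β + max 0 (β * min t q - b) / β = max (b / β) (min t q) := by
        rcases le_total 0 (β * min t q - b) with h | h
        · rw [max_eq_right h, max_eq_right (by rw [div_le_iff₀ hβ0]; linarith)]; field_simp; ring
        · rw [max_eq_left h, max_eq_left (by rw [le_div_iff₀ hβ0]; linarith)]; simp
      rw [e7, lt_max_iff, lt_min_iff]
      constructor
      · rintro ⟨⟨_, h⟩, h', h''⟩; exact ⟨h', Or.inr ⟨h, h''⟩⟩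
      · rintro ⟨h, h' | h'⟩
        · linarith
        · exact ⟨⟨by linarith, h'.1⟩, h, h'.2⟩
    · intro x hx
      rw [hmem] at hx
      rw [List.length_append, List.length_singleton, Function.iterate_succ_apply', h2 x hx.1,
        greedyT_digit hβ0 ha₁ h12 hb hx.2, pow_succ]
      field_simp
      ring

theorem cyl_prefix_subset (β a₁ a₂ : ℝ) {w' w : List ℝ} (h : w' <+: w) :
    cyl β a₁ a₂ w ⊆ cyl β a₁ a₂ w' := by
  obtain ⟨v, rfl⟩ := h
  induction v using List.reverseRecOn with
  | nil => simp
  | append_singleton v b ih =>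
    rw [← List.append_assoc, cyl_append]
    exact inter_subset_left.trans ih

theorem cyl_subset_Ico {β a₁ a₂ : ℝ} (hβ : 1 < β) (ha₁ : 0 < a₁) (h12 : a₁ < a₂)
    (hc : condition6 β a₁ a₂) {w : List ℝ} (hw : isWord a₁ a₂ w) (hne : w ≠ []) :
    cyl β a₁ a₂ w ⊆ Ico 0 a₁ := by
  have hβ0 : 0 < β := by linarith
  have ha2 : 0 < a₂ := ha₁.trans h12
  obtain ⟨b, v, rfl⟩ := List.exists_cons_of_ne_nil hne
  have h1 : cyl β a₁ a₂ (b :: v) ⊆ cyl β a₁ a₂ [b] := cyl_prefix_subset _ _ _ ⟨v, rfl⟩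
  have h2 : cyl β a₁ a₂ [b] = digitInt β a₁ a₂ b := by
    have := cyl_append β a₁ a₂ [] b
    simpa [cyl] using this
  have d2 : a₂ < a₁ * β := lt_of_lt_of_le hc.2 (by gcongr; exact min_le_right _ _)
  refine h1.trans (h2 ▸ ?_)
  have e1 : a₁ / β ≤ a₁ := div_le_self ha₁.le hβ.le
  have e2 : a₂ / β ≤ a₁ := by rw [div_le_iff₀ hβ0]; exact d2.le
  have e3 : 0 ≤ a₁ / β := by positivity
  have e4 : 0 ≤ a₂ / β := by positivity
  unfold digitInt
  split_ifs
  · exact Ico_subset_Ico le_rfl e1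
  · exact Ico_subset_Ico e3 e2
  · exact Ico_subset_Ico e4 le_rfl

theorem volume_cyl {β a₁ a₂ : ℝ} (hβ : 1 < β) (ha₁ : 0 < a₁) (h12 : a₁ < a₂)
    (hc : condition6 β a₁ a₂) {w : List ℝ} (hw : isWord a₁ a₂ w) (hne : w ≠ []) :
    volume (cyl β a₁ a₂ w) = ENNReal.ofReal (tau β a₁ a₂ w / β ^ w.length) := by
  obtain ⟨c, h, -⟩ := cyl_struct hβ ha₁ h12 w hw
  rw [inter_eq_right.2 (cyl_subset_Ico hβ ha₁ h12 hc hw hne)] at h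
  rw [h, Real.volume_Ico, add_sub_cancel_left]

open Classical in
/-- finite sets containing the non-full words -/
noncomputable def Fset (β a₁ a₂ : ℝ) : ℕ → Finset (List ℝ)
  | 0 => {[]}
  | n + 1 => (Fset β a₁ a₂ n).biUnion fun w =>
      (({0, a₁, a₂} : Finset ℝ).image (fun b => w ++ [b])).filter
        (fun v => 0 < tau β a₁ a₂ v ∧ tau β a₁ a₂ v < a₁)

theorem Fset_tau {β a₁ a₂ : ℝ} (ha₁ : 0 < a₁) (n : ℕ) :
    ∀ w ∈ Fset β a₁ a₂ n, 0 < tau β a₁ a₂ w ∧ tau β a₁ a₂ w ≤ a₁ := by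
  classical
  cases n with
  | zero => simp [Fset, tau, ha₁]
  | succ n =>
    intro w hw
    simp only [Fset, Finset.mem_biUnion, Finset.mem_filter] at hw
    obtain ⟨_, _, _, h⟩ := hw
    exact ⟨h.1, h.2.le⟩

theorem mem_Fset {β a₁ a₂ : ℝ} (n : ℕ) : ∀ w : List ℝ, w.length = n → isWord a₁ a₂ w →
    (∀ w' : List ℝ, w' ≠ [] → w' <+: w → 0 < tau β a₁ a₂ w' ∧ tau β a₁ a₂ w' < a₁) →
    w ∈ Fset β a₁ a₂ n := by
  classical
  induction n with
  | zero => intro w hw _ _; simp [Fset, List.length_eq_zero_iff.1 hw]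
  | succ n ih =>
    intro w hl hw hp
    rcases List.eq_nil_or_concat w with rfl | ⟨v, b, rfl⟩
    · simp at hl
    · rw [List.concat_eq_append] at *
      simp only [Fset, Finset.mem_biUnion, Finset.mem_filter]
      refine ⟨v, ih v (by simpa using hl) (fun b hb => hw b (by simp [hb]))
        (fun w' h1 h2 => hp w' h1 (h2.trans ⟨[b], rfl⟩)), ?_, hp _ (by simp) List.prefix_rfl⟩
      have := hw b (by simp)
      simp only [Finset.mem_image]
      exact ⟨b, by simpa using this, rfl⟩

theorem step_ineq {β a₁ a₂ A B t : ℝ} (hβ : 1 < β) (ha₁ : 0 < a₁) (h12 : a₁ < a₂)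
    (hc : condition6 β a₁ a₂) (ht : 0 < t) (hta : t ≤ a₁)
    (hA : A = β / (β - 1)) (hB : B = (β + 2 * A) / a₁) (f : ℝ → ℝ)
    (hf : ∀ b, f b = if 0 < tauStep β a₁ a₂ t b ∧ tauStep β a₁ a₂ t b < a₁ then
      A + B * tauStep β a₁ a₂ t b else 0) :
    f 0 + f a₁ + f a₂ ≤ β * (A + B * t - 1) := by
  have hβ0 : 0 < β := by linarith
  have hβ1 : 0 < β - 1 := by linarith
  have ha2 : 0 < a₂ := ha₁.trans h12
  have h1 : a₁ ≠ 0 := ha₁.ne'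
  have h2 : a₂ ≠ 0 := ha2.ne'
  have h3 : a₂ ≠ a₁ := h12.ne'
  have hA0 : 0 < A := by rw [hA]; positivity
  have hB0 : 0 < B := by rw [hB]; positivity
  have hA' : β * A - A = β := by rw [hA]; field_simp
  have hB' : B * a₁ = β + 2 * A := by rw [hB]; field_simp
  have e1 : β * (a₁ / β) = a₁ := by field_simp
  have e2 : β * (a₂ / β) = a₂ := by field_simp
  have d2 : a₂ < a₁ * β := lt_of_lt_of_le hc.2 (by gcongr; exact min_le_right _ _)
  have e3 : a₂ / β ≤ a₁ := by rw [div_le_iff₀ hβ0]; exact d2.le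
  have e4 : a₁ / β < a₂ / β := by gcongr
  have q0 : tauStep β a₁ a₂ t 0 = max 0 (β * min t (a₁ / β) - 0) := by simp [tauStep, qEnd]
  have q1 : tauStep β a₁ a₂ t a₁ = max 0 (β * min t (a₂ / β) - a₁) := by simp [tauStep, qEnd, h1]
  have q2 : tauStep β a₁ a₂ t a₂ = max 0 (β * min t a₁ - a₂) := by simp [tauStep, qEnd, h2, h3]
  rw [min_eq_left hta] at q2
  rcases le_or_gt (a₁ / β) t with c1 | c1
  · have z0 : f 0 = 0 := by
      rw [hf, if_neg]
      rw [q0, min_eq_right c1, e1, sub_zero, max_eq_right ha₁.le]; simp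
    rcases le_or_gt t (a₂ / β) with c2 | c2
    · have z2 : f a₂ = 0 := by
        rw [hf, if_neg]
        rw [q2, max_eq_left]; · simp
        have : β * t ≤ β * (a₂ / β) := by gcongr
        linarith
      have z1 : f a₁ ≤ A + B * (β * t - a₁) := by
        have : a₁ ≤ β * t := by rw [← e1]; gcongr
        rw [min_eq_left c2, max_eq_right (by linarith)] at q1
        rw [hf, q1]
        split_ifs
        · rfl
        · have : 0 ≤ B * (β * t - a₁) := mul_nonneg hB0.le (by linarith)
          linarith
      rw [z0, z2]
      nlinarith
    · have hbt : a₂ ≤ β * t := by rw [← e2]; gcongr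
      have z1 : f a₁ ≤ A + B * (a₂ - a₁) := by
        rw [min_eq_right c2.le, e2, max_eq_right (by linarith)] at q1
        rw [hf, q1]
        split_ifs
        · rfl
        · have : 0 ≤ B * (a₂ - a₁) := mul_nonneg hB0.le (by linarith)
          linarith
      have z2 : f a₂ ≤ A + B * (β * t - a₂) := by
        rw [max_eq_right (by linarith)] at q2
        rw [hf, q2]
        split_ifs
        · rfl
        · have : 0 ≤ B * (β * t - a₂) := mul_nonneg hB0.le (by linarith)
          linarith
      rw [z0]
      nlinarith
  · have hbt : β * t < a₁ := by
      calc β * t < β * (a₁ / β) := by gcongr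
        _ = a₁ := e1
    have z1 : f a₁ = 0 := by
      rw [hf, if_neg]
      rw [q1, min_eq_left (by linarith), max_eq_left (by linarith)]; simp
    have z2 : f a₂ = 0 := by
      rw [hf, if_neg]
      rw [q2, max_eq_left (by linarith)]; simp
    have z0 : f 0 ≤ A + B * (β * t) := by
      have : 0 < β * t := by positivity
      rw [min_eq_left c1.le, sub_zero, max_eq_right this.le] at q0
      rw [hf, q0, if_pos ⟨this, hbt⟩]
    rw [z1, z2]
    nlinarith

theorem S_step {β a₁ a₂ A B : ℝ} (hβ : 1 < β) (ha₁ : 0 < a₁) (h12 : a₁ < a₂)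
    (hc : condition6 β a₁ a₂) (hA : A = β / (β - 1)) (hB : B = (β + 2 * A) / a₁) (n : ℕ) :
    ∑ w ∈ Fset β a₁ a₂ (n + 1), (A + B * tau β a₁ a₂ w) ≤
      β * (∑ w ∈ Fset β a₁ a₂ n, (A + B * tau β a₁ a₂ w) - (Fset β a₁ a₂ n).card) := by
  classical
  rw [Fset, Finset.sum_biUnion]
  · rw [Finset.card_eq_sum_ones, Nat.cast_sum, ← Finset.sum_sub_distrib, Finset.mul_sum]
    refine Finset.sum_le_sum fun w hw => ?_
    obtain ⟨t0, t1⟩ := Fset_tau ha₁ n w hw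
    rw [Finset.sum_filter, Finset.sum_image (fun a _ b _ h => by simpa using h),
      Finset.sum_insert (by simp [ha₁.ne, (ha₁.trans h12).ne]),
      Finset.sum_pair h12.ne, ← add_assoc]
    simp only [tau_append]
    push_cast
    exact step_ineq hβ ha₁ h12 hc t0 t1 hA hB
      (fun b => if 0 < tauStep β a₁ a₂ (tau β a₁ a₂ w) b ∧
        tauStep β a₁ a₂ (tau β a₁ a₂ w) b < a₁ then
        A + B * tauStep β a₁ a₂ (tau β a₁ a₂ w) b else 0) (fun b => rfl)
  · intro w _ v _ hwv
    rw [Function.onFun, Finset.disjoint_left]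
    intro x hx hy
    simp only [Finset.mem_filter, Finset.mem_image] at hx hy
    obtain ⟨⟨b, _, rfl⟩, _⟩ := hx
    obtain ⟨⟨b', _, h⟩, _⟩ := hy
    exact hwv (List.append_inj' h rfl).1.symm

theorem card_sum {β a₁ a₂ : ℝ} (hβ : 1 < β) (ha₁ : 0 < a₁) (h12 : a₁ < a₂)
    (hc : condition6 β a₁ a₂) :
    ∃ C : ℝ, 0 ≤ C ∧ ∀ N : ℕ,
      ∑ n ∈ Finset.range N, ((Fset β a₁ a₂ n).card : ℝ) * (β ^ n)⁻¹ ≤ C := by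
  have hβ0 : 0 < β := by linarith
  have hβ1 : 0 < β - 1 := by linarith
  obtain ⟨A, hA⟩ : ∃ A, A = β / (β - 1) := ⟨_, rfl⟩
  obtain ⟨B, hB⟩ : ∃ B, B = (β + 2 * A) / a₁ := ⟨_, rfl⟩
  have hA0 : 0 < A := by rw [hA]; positivity
  have hB0 : 0 < B := by rw [hB]; positivity
  have hS : ∀ n, 0 ≤ ∑ w ∈ Fset β a₁ a₂ n, (A + B * tau β a₁ a₂ w) := fun n =>
    Finset.sum_nonneg fun w hw => by have := (Fset_tau ha₁ n w hw).1; positivity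
  refine ⟨_, hS 0, fun N => ?_⟩
  have key : ∑ n ∈ Finset.range N, ((Fset β a₁ a₂ n).card : ℝ) * (β ^ n)⁻¹ ≤
      ∑ w ∈ Fset β a₁ a₂ 0, (A + B * tau β a₁ a₂ w) -
        (∑ w ∈ Fset β a₁ a₂ N, (A + B * tau β a₁ a₂ w)) * (β ^ N)⁻¹ := by
    induction N with
    | zero => simp
    | succ N ih =>
      rw [Finset.sum_range_succ]
      have h := S_step hβ ha₁ h12 hc hA hB N
      have h' := mul_le_mul_of_nonneg_right h (show 0 ≤ (β ^ (N + 1))⁻¹ by positivity)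
      have e : β * (∑ w ∈ Fset β a₁ a₂ N, (A + B * tau β a₁ a₂ w) - (Fset β a₁ a₂ N).card) *
          (β ^ (N + 1))⁻¹ =
          (∑ w ∈ Fset β a₁ a₂ N, (A + B * tau β a₁ a₂ w)) * (β ^ N)⁻¹ -
            (Fset β a₁ a₂ N).card * (β ^ N)⁻¹ := by
        rw [pow_succ]; field_simp
      rw [e] at h'
      linarith
  have : 0 ≤ (∑ w ∈ Fset β a₁ a₂ N, (A + B * tau β a₁ a₂ w)) * (β ^ N)⁻¹ :=
    mul_nonneg (hS N) (by positivity)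
  linarith

theorem memB_mem_Fset {β a₁ a₂ : ℝ} (hβ : 1 < β) (ha₁ : 0 < a₁) (h12 : a₁ < a₂)
    (hc : condition6 β a₁ a₂) {n : ℕ} {w : List ℝ} (h : memB β a₁ a₂ n w) :
    w ∈ Fset β a₁ a₂ n := by
  have hβ0 : 0 < β := by linarith
  obtain ⟨hl, hw, hpos, hnf, hpre⟩ := h
  refine mem_Fset n w hl hw fun w' hne hp => ?_
  have hw' : isWord a₁ a₂ w' := fun b hb => hw b (hp.subset hb)
  have hvol := volume_cyl hβ ha₁ h12 hc hw' hne
  have hP : 0 < β ^ w'.length := by positivity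
  constructor
  · have := lt_of_lt_of_le hpos (measure_mono (cyl_prefix_subset β a₁ a₂ hp))
    rw [hvol, ENNReal.ofReal_pos, div_pos_iff_of_pos_right hP] at this
    exact this
  · refine lt_of_le_of_ne (tau_mem hβ0 ha₁ h12 hc w' hw').2 fun he => ?_
    have hfull : isFull β a₁ a₂ w' := by rw [isFull, hvol, he]
    by_cases hww : w' = w
    · exact hnf (hww ▸ hfull)
    · exact hpre w' hne hp hww hfull

theorem phi_ge_one {β a₁ a₂ : ℝ} (hβ : 1 < β) (x : ℝ) : 1 ≤ phi β a₁ a₂ x := by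
  have hβ0 : 0 < β := by linarith
  unfold phi
  have : 0 ≤ ∑' n : ℕ, ∑' w : {w : List ℝ // memB β a₁ a₂ (n + 1) w},
    Set.indicator ((greedyT β a₁ a₂)^[n + 1] '' cyl β a₁ a₂ w.1)
      (fun _ => (β ^ (n + 1))⁻¹) x :=
    tsum_nonneg fun n => tsum_nonneg fun w => indicator_nonneg (fun _ _ => by positivity) _
  linarith

theorem phi_bdd {β a₁ a₂ : ℝ} (hβ : 1 < β) (ha₁ : 0 < a₁) (h12 : a₁ < a₂)
    (hc : condition6 β a₁ a₂) : ∃ C : ℝ, 0 < C ∧ ∀ x, phi β a₁ a₂ x ≤ C := by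
  have hβ0 : 0 < β := by linarith
  obtain ⟨C, hC, hb⟩ := card_sum hβ ha₁ h12 hc
  refine ⟨1 + C, by linarith, fun x => ?_⟩
  unfold phi
  gcongr
  refine Real.tsum_le_of_sum_range_le
    (fun n => tsum_nonneg fun w => indicator_nonneg (fun _ _ => by positivity) _) fun N => ?_
  refine le_trans (Finset.sum_le_sum (g := fun n => ((Fset β a₁ a₂ (n + 1)).card : ℝ) *
    (β ^ (n + 1))⁻¹) fun n _ => ?_) ?_
  · let ι : {w : List ℝ // memB β a₁ a₂ (n + 1) w} → Fset β a₁ a₂ (n + 1) :=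
      fun w => ⟨w.1, memB_mem_Fset hβ ha₁ h12 hc w.2⟩
    have hι : Function.Injective ι := fun a b h => Subtype.ext (congrArg (fun z => z.1) h)
    haveI : Finite {w : List ℝ // memB β a₁ a₂ (n + 1) w} := Finite.of_injective ι hι
    haveI := Fintype.ofFinite {w : List ℝ // memB β a₁ a₂ (n + 1) w}
    rw [tsum_fintype]
    calc _ ≤ ∑ w : {w : List ℝ // memB β a₁ a₂ (n + 1) w}, (β ^ (n + 1))⁻¹ := by
          refine Finset.sum_le_sum fun w _ => ?_
          exact indicator_le_self' (fun _ _ => by positivity) x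
      _ = (Fintype.card {w : List ℝ // memB β a₁ a₂ (n + 1) w} : ℝ) * (β ^ (n + 1))⁻¹ := by
          simp
      _ ≤ _ := by
          gcongr
          simpa using Fintype.card_le_of_injective ι hι
  · have h := hb (N + 1)
    rw [Finset.sum_range_succ'] at h
    have : 0 ≤ ((Fset β a₁ a₂ 0).card : ℝ) * (β ^ 0)⁻¹ := by positivity
    linarith

/-- There exists `γ > 0` such that for every `n ≥ 1`, every word
`w` of length `n` over `A` with `Δ(w)` full, and every Borel `E ⊆ Δ(w)`, one
has `μ(Tⁿ(E))·μ(Δ(w)) ≤ γ·μ(E)` (Rohlin's criterion for exactness). -/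
theorem stmt14 (β a₁ a₂ : ℝ) (hβ1 : 1 < β) (hβ3 : β < 3)
    (ha₁ : 0 < a₁) (h12 : a₁ < a₂) (hc : condition6 β a₁ a₂) :
    ∃ γ : ℝ, 0 < γ ∧
      ∀ n : ℕ, 1 ≤ n → ∀ w : List ℝ, isWord a₁ a₂ w → w.length = n →
        isFull β a₁ a₂ w →
        ∀ E : Set ℝ, E ⊆ cyl β a₁ a₂ w → MeasurableSet E →
          muMeas β a₁ a₂ ((greedyT β a₁ a₂)^[n] '' E) *
              muMeas β a₁ a₂ (cyl β a₁ a₂ w) ≤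
            ENNReal.ofReal γ * muMeas β a₁ a₂ E := by
  have hβ0 : 0 < β := by linarith
  obtain ⟨C, hC, hphi⟩ := phi_bdd hβ1 ha₁ h12 hc
  refine ⟨C * C * a₁, by positivity, ?_⟩
  intro n hn w hw hl hfull E hE hEm
  have hne : w ≠ [] := by rintro rfl; simp at hl; omega
  have hsub := cyl_subset_Ico hβ1 ha₁ h12 hc hw hne
  have hup : ∀ S : Set ℝ, muMeas β a₁ a₂ S ≤ ENNReal.ofReal C * volume S := by
    intro S
    have h1 : muMeas β a₁ a₂ ≤ ENNReal.ofReal C • volume.restrict (Ico 0 a₁) := by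
      rw [← withDensity_const]
      exact withDensity_mono (Filter.Eventually.of_forall fun x =>
        ENNReal.ofReal_le_ofReal (hphi x))
    calc muMeas β a₁ a₂ S ≤ (ENNReal.ofReal C • volume.restrict (Ico 0 a₁)) S := h1 S
      _ = ENNReal.ofReal C * volume.restrict (Ico 0 a₁) S := rfl
      _ ≤ _ := by gcongr; exact Measure.restrict_le_self
  have hlow : volume E ≤ muMeas β a₁ a₂ E := by
    have h1 : (1 : ENNReal) • volume.restrict (Ico 0 a₁) ≤ muMeas β a₁ a₂ := by
      rw [← withDensity_const]
      refine withDensity_mono (Filter.Eventually.of_forall fun x => ?_)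
      simpa using ENNReal.ofReal_le_ofReal (phi_ge_one (a₁ := a₁) (a₂ := a₂) hβ1 x)
    rw [one_smul] at h1
    calc volume E = volume.restrict (Ico 0 a₁) E :=
          (Measure.restrict_eq_self _ (hE.trans hsub)).symm
      _ ≤ _ := h1 E
  have hP : 0 < β ^ n := by positivity
  have himg : volume ((greedyT β a₁ a₂)^[n] '' E) = ENNReal.ofReal (β ^ n) * volume E := by
    obtain ⟨c, -, h⟩ := cyl_struct hβ1 ha₁ h12 w hw
    have e : (greedyT β a₁ a₂)^[n] '' E = (fun y => (β ^ n)⁻¹ * y) ⁻¹' ((fun z => z + c) ⁻¹' E) := by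
      ext y
      simp only [mem_image, mem_preimage]
      constructor
      · rintro ⟨x, hx, rfl⟩
        rw [← hl, h x ⟨hsub (hE hx), hE hx⟩, hl, inv_mul_cancel_left₀ hP.ne']
        simpa using hx
      · intro hy
        refine ⟨_, hy, ?_⟩
        rw [← hl, h _ ⟨hsub (hE (hl ▸ hy)), hE (hl ▸ hy)⟩, hl, add_sub_cancel_right,
          mul_inv_cancel_left₀ hP.ne']
    rw [e, Real.volume_preimage_mul_left (by positivity), measure_preimage_add_right, inv_inv,
      abs_of_pos hP]
  calc _ ≤ (ENNReal.ofReal C * (ENNReal.ofReal (β ^ n) * volume E)) *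
        (ENNReal.ofReal C * ENNReal.ofReal (a₁ / β ^ n)) := by
        refine mul_le_mul' (himg ▸ hup _) ?_
        have := hup (cyl β a₁ a₂ w)
        rwa [hfull, hl] at this
    _ = ENNReal.ofReal (C * C * a₁) * volume E := by
        rw [show C * C * a₁ = C * (β ^ n * (C * (a₁ / β ^ n))) by field_simp,
          ENNReal.ofReal_mul hC.le, ENNReal.ofReal_mul hP.le, ENNReal.ofReal_mul hC.le]
        ring
    _ ≤ _ := by gcongr
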